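/- Consider F(x) = f(x) + P₁(x) − P₂(x) with P₂ having globally Lipschitz gradient, and define Ê(x, w) = F(x) + (L/2)‖x − w‖² and E(x, y, w) = f(x) + P₁(x) − ⟨x, y⟩ + P₂*(y) + (L/2)‖x − w‖². If Ê is a KL function with exponent 1/2, then E is a KL function with exponent 1/2. -/

import Mathlib

open Filter Topology Set Metric Bornology
open scoped RealInnerProductSpace

noncomputable section

abbrev Eucl (n : ℕ) := EuclideanSpace ℝ (Fin n)

variable {H : Type*} [NormedAddCommGroup H] [InnerProductSpace ℝ H]

/-- Fréchet (regular) subgradient of an extended-real-valued function. -/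
def FrechetSubgradAt (h : H → EReal) (v x : H) : Prop :=
  ∀ ε : ℝ, 0 < ε →
    ∀ᶠ y in 𝓝[≠] x, h x + ((⟪v, y - x⟫ - ε * ‖y - x‖ : ℝ) : EReal) ≤ h y

/-- Limiting (Mordukhovich) subdifferential. -/
def limSubdiff (h : H → EReal) (x : H) : Set H :=
  {v | ∃ xs vs : ℕ → H,
    Tendsto xs atTop (𝓝 x) ∧
    Tendsto (fun k => h (xs k)) atTop (𝓝 (h x)) ∧
    Tendsto vs atTop (𝓝 v) ∧
    ∀ k, FrechetSubgradAt h (vs k) (xs k)}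

/-- Convex subgradient of a real-valued function. -/
def ConvexSubgradAt (g : H → ℝ) (v x : H) : Prop :=
  ∀ y, g x + ⟪v, y - x⟫ ≤ g y

/-- Convex subgradient of an extended-real-valued function. -/
def ConvexSubgradAtE (g : H → EReal) (v x : H) : Prop :=
  ∀ y, g x + ((⟪v, y - x⟫ : ℝ) : EReal) ≤ g y

/-- Convex conjugate of a real-valued function. -/
def conjE (g : H → ℝ) (y : H) : EReal :=
  ⨆ x : H, ((⟪x, y⟫ - g x : ℝ) : EReal)

/-- `P` is proper, closed (lsc) and convex. -/
def ProperClosedConvexE (P : H → EReal) : Prop :=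
  (∀ x, P x ≠ ⊥) ∧ (∃ x, P x ≠ ⊤) ∧ LowerSemicontinuous P ∧
  (∀ x y : H, ∀ t : ℝ, t ∈ Ioo (0:ℝ) 1 →
    P (t • x + (1 - t) • y) ≤ (t : EReal) * P x + ((1 - t : ℝ) : EReal) * P y)

/-- KL property with exponent `α` at a point. -/
def KLExpAt (h : H → EReal) (α : ℝ) (x₀ : H) : Prop :=
  ∃ c > (0:ℝ), ∃ ε > (0:ℝ), ∃ a > (0:ℝ), ∀ x : H,
    ‖x - x₀‖ ≤ ε → h x₀ < h x → h x < h x₀ + (a : EReal) →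
    (limSubdiff h x).Nonempty →
    1 ≤ c * (1 - α) * ((h x).toReal - (h x₀).toReal) ^ (-α) * infDist 0 (limSubdiff h x)

/-- KL function with exponent `α`. -/
def IsKLWithExp (h : H → EReal) (α : ℝ) : Prop :=
  ∀ x₀ : H, (limSubdiff h x₀).Nonempty → KLExpAt h α x₀

/-- KL property (general desingularizing function) at a point. -/
def KLAt (h : H → EReal) (x₀ : H) : Prop :=
  ∃ a > (0:ℝ), ∃ U ∈ 𝓝 x₀, ∃ φ φd : ℝ → ℝ,
    ContinuousOn φ (Ico 0 a) ∧ ConcaveOn ℝ (Ico 0 a) φ ∧ φ 0 = 0 ∧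
    (∀ s ∈ Ico (0:ℝ) a, 0 ≤ φ s) ∧
    (∀ s ∈ Ioo (0:ℝ) a, HasDerivAt φ (φd s) s ∧ 0 < φd s) ∧
    ∀ x ∈ U, h x₀ < h x → h x < h x₀ + (a : EReal) → (limSubdiff h x).Nonempty →
      1 ≤ φd ((h x).toReal - (h x₀).toReal) * infDist 0 (limSubdiff h x)

/-- KL function. -/
def IsKLFun (h : H → EReal) : Prop :=
  ∀ x₀ : H, (limSubdiff h x₀).Nonempty → KLAt h x₀

/-- The potential function `E(x,y,w) = f(x) + P₁(x) - ⟨x,y⟩ + P₂*(y) + L/2 ‖x-w‖²`. -/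
def potE (f : H → ℝ) (P₁ : H → EReal) (P₂ : H → ℝ) (L : ℝ) (x y w : H) : EReal :=
  ((f x : ℝ) : EReal) + P₁ x - ((⟪x, y⟫ : ℝ) : EReal) + conjE P₂ y
    + ((L / 2 * ‖x - w‖ ^ 2 : ℝ) : EReal)

/-- The pDCAe iteration: `ξ^{k+1} ∈ ∂P₂(x^k)`, `u^k = x^k + β_k (x^k - x^{k-1})` and
`x^{k+1}` is the minimizer of `⟨∇f(u^k) - ξ^{k+1}, ·⟩ + L/2 ‖· - u^k‖² + P₁(·)`.
(`x⁻¹ = x⁰` is encoded by truncated subtraction in `ℕ`.) -/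
def IsPDCAe (f' : H → H) (P₁ : H → EReal) (P₂ : H → ℝ) (L : ℝ) (β : ℕ → ℝ)
    (x ξ : ℕ → H) : Prop :=
  P₁ (x 0) ≠ ⊤ ∧
  (∀ k : ℕ, ConvexSubgradAt P₂ (ξ (k + 1)) (x k)) ∧
  (∀ k : ℕ, ∀ z : H,
    ((⟪f' (x k + β k • (x k - x (k - 1))) - ξ (k + 1), x (k + 1)⟫
        + L / 2 * ‖x (k + 1) - (x k + β k • (x k - x (k - 1)))‖ ^ 2 : ℝ) : EReal)
      + P₁ (x (k + 1))
      ≤ ((⟪f' (x k + β k • (x k - x (k - 1))) - ξ (k + 1), z⟫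
        + L / 2 * ‖z - (x k + β k • (x k - x (k - 1)))‖ ^ 2 : ℝ) : EReal) + P₁ z)

/-- Triples `(x, y, w)` with the ℓ² product inner product structure. -/
abbrev Trip (n : ℕ) := WithLp 2 (Eucl n × WithLp 2 (Eucl n × Eucl n))

def mkTrip {n : ℕ} (a b c : Eucl n) : Trip n :=
  (WithLp.equiv 2 _).symm (a, (WithLp.equiv 2 _).symm (b, c))

/-- `potE` as a function on triples. -/
def potE3 {n : ℕ} (f : Eucl n → ℝ) (P₁ : Eucl n → EReal) (P₂ : Eucl n → ℝ) (L : ℝ)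
    (p : Trip n) : EReal :=
  potE f P₁ P₂ L ((WithLp.equiv 2 _) p).1 ((WithLp.equiv 2 _) ((WithLp.equiv 2 _) p).2).1
    ((WithLp.equiv 2 _) ((WithLp.equiv 2 _) p).2).2

/-- Pairs with the ℓ² product inner product structure. -/
abbrev Pr2 (n : ℕ) := WithLp 2 (Eucl n × Eucl n)

/-- `Ê(x, w) = F(x) + L/2 ‖x - w‖²` as a function on pairs. -/
def hatE3 {n : ℕ} (f : Eucl n → ℝ) (P₁ : Eucl n → EReal) (P₂ : Eucl n → ℝ) (L : ℝ)
    (p : Pr2 n) : EReal :=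
  ((f ((WithLp.equiv 2 _) p).1 : ℝ) : EReal) + P₁ ((WithLp.equiv 2 _) p).1
    - ((P₂ ((WithLp.equiv 2 _) p).1 : ℝ) : EReal)
    + ((L / 2 * ‖((WithLp.equiv 2 _) p).1 - ((WithLp.equiv 2 _) p).2‖ ^ 2 : ℝ) : EReal)

/-!
Let `q = (u, v)` be a subgradient at `(z, y)` of `E(z, y) = G z - ⟨A z, y⟩ + g*(y)`, where `g` is
convex with `ℓ`-Lipschitz gradient, and let `Ê(z) = G z - g (A z)`. As `g*` is convex, the
`y`-component says `A z + v ∈ ∂g*(y)`, that is, `y = ∇g (A z + v)`. Hence `E(z, y) - Ê(z)` is the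
Bregman distance `D_g(A z, A z + v)`, which lies in `[0, ℓ ‖v‖²]`. Freezing `y` shows that
`u + A*(y - ∇g (A z))` is a subgradient of `Ê` at `z`, of norm at most `(1 + ‖A‖ ℓ) ‖q‖`.

At a base point with `y₀ = ∇g (A z₀)` the values of `E` and `Ê` agree, and the KL inequality for
`Ê` bounds `E - E₀ ≤ (Ê - Ê₀) + ℓ ‖v‖²` by a power of `‖q‖`. At any other base point
`ℓ ‖v‖ ≥ ‖y - ∇g (A z)‖` keeps `‖q‖` away from zero nearby. The potentials of the theorem are the
case `A (x, w) = x`, `g = P₂`.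
-/

open scoped NNReal

/-! ### Fréchet and limiting subgradients -/

lemma FrechetSubgradAt.eventually_nhds {h : H → EReal} {v x : H} (hv : FrechetSubgradAt h v x)
    {ε : ℝ} (hε : 0 < ε) :
    ∀ᶠ y in 𝓝 x, h x + ((⟪v, y - x⟫ - ε * ‖y - x‖ : ℝ) : EReal) ≤ h y := by
  filter_upwards [eventually_nhdsWithin_iff.1 (hv ε hε)] with y hy
  rcases eq_or_ne y x with rfl | hyx
  · simp
  · exact hy hyx

lemma FrechetSubgradAt.add {h₁ h₂ : H → EReal} {v w x : H} (hv : FrechetSubgradAt h₁ v x)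
    (hw : FrechetSubgradAt h₂ w x) : FrechetSubgradAt (fun y => h₁ y + h₂ y) (v + w) x := by
  intro ε hε
  filter_upwards [hv _ (half_pos hε), hw _ (half_pos hε)] with y hvy hwy
  have split : ⟪v + w, y - x⟫ - ε * ‖y - x‖ =
      (⟪v, y - x⟫ - ε / 2 * ‖y - x‖) + (⟪w, y - x⟫ - ε / 2 * ‖y - x‖) := by
    rw [inner_add_left]
    ring
  rw [split, EReal.coe_add, add_add_add_comm]
  exact add_le_add hvy hwy

lemma frechetSubgradAt_of_hasGradientAt [CompleteSpace H] {φ : H → ℝ} {w x : H}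
    (hφ : HasGradientAt φ w x) : FrechetSubgradAt (fun y => (φ y : EReal)) w x := by
  intro ε hε
  have small := (hasGradientAt_iff_isLittleO.1 hφ).bound hε
  filter_upwards [nhdsWithin_le_nhds small] with y hy
  have lower := (abs_le.1 hy).1
  exact_mod_cast (by linarith : φ x + (⟪w, y - x⟫ - ε * ‖y - x‖) ≤ φ y)

lemma FrechetSubgradAt.comp_isometry {X Y : Type*} [NormedAddCommGroup X] [InnerProductSpace ℝ X]
    [NormedAddCommGroup Y] [InnerProductSpace ℝ Y] {h : Y → EReal} {φ : X → Y} {v : Y} {w x : X}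
    (hv : FrechetSubgradAt h v (φ x)) (hφ : Isometry φ)
    (hw : ∀ x', ⟪v, φ x' - φ x⟫ = ⟪w, x' - x⟫) : FrechetSubgradAt (h ∘ φ) w x := by
  intro ε hε
  have pulled := (hφ.continuous.tendsto x).eventually (hv.eventually_nhds hε)
  filter_upwards [nhdsWithin_le_nhds pulled] with x' hx'
  rwa [hw, ← dist_eq_norm (φ x'), hφ.dist_eq, dist_eq_norm] at hx'

lemma FrechetSubgradAt.convexSubgradAtE {h : H → EReal} {v x : H}
    (hconv : Convex ℝ {p : H × ℝ | h p.1 ≤ p.2}) (hx : h x ≠ ⊤) (hv : FrechetSubgradAt h v x) :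
    ConvexSubgradAtE h v x := by
  refine fun y => EReal.le_of_forall_lt_iff_le.1 fun d hd => ?_
  induction hb : h x with
  | bot => simp
  | top => exact absurd hb hx
  | coe b =>
    have approx : ∀ ε > 0, b + ⟪v, y - x⟫ ≤ d + ε * ‖y - x‖ := by
      intro ε hε
      have segment_tendsto : Tendsto (fun t : ℝ => x + t • (y - x)) (𝓝[>] 0) (𝓝 x) :=
        (Continuous.tendsto' (by fun_prop) 0 x (by simp)).mono_left nhdsWithin_le_nhds
      obtain ⟨t, ht, ht0, ht1⟩ := ((segment_tendsto.eventually (hv.eventually_nhds hε)).and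
        (Ioo_mem_nhdsGT one_pos)).exists
      have below_chord : h (x + t • (y - x)) ≤ ((b + t * (d - b) : ℝ) : EReal) :=
        hconv.add_smul_sub_mem (x := (x, b)) (y := (y, d)) hb.le hd.le ⟨ht0.le, ht1.le⟩
      have chord := ht.trans below_chord
      rw [hb, add_sub_cancel_left, inner_smul_right, norm_smul, Real.norm_of_nonneg ht0.le] at chord
      have chord_real : b + (t * ⟪v, y - x⟫ - ε * (t * ‖y - x‖)) ≤ b + t * (d - b) := by
        exact_mod_cast chord
      refine le_of_mul_le_mul_left ?_ ht0
      linarith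
    have limit : Tendsto (fun ε => d + ε * ‖y - x‖) (𝓝[>] 0) (𝓝 d) :=
      (Continuous.tendsto' (by fun_prop) 0 d (by simp)).mono_left nhdsWithin_le_nhds
    exact_mod_cast ge_of_tendsto limit (eventually_mem_nhdsWithin.mono approx)

lemma convexSubgradAt_of_hasGradientAt [CompleteSpace H] {g : H → ℝ} {w x : H}
    (hconv : ConvexOn ℝ univ g) (hg : HasGradientAt g w x) : ConvexSubgradAt g w x := by
  have hepi : Convex ℝ {p : H × ℝ | (g p.1 : EReal) ≤ p.2} := by
    simpa using hconv.convex_epigraph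
  have hsub : ConvexSubgradAtE (fun x => (g x : EReal)) w x :=
    (frechetSubgradAt_of_hasGradientAt hg).convexSubgradAtE hepi (EReal.coe_ne_top _)
  exact fun y => by simpa [← EReal.coe_add] using hsub y

lemma mem_limSubdiff_of_eventually {h : H → EReal} {v x : H} {xs vs : ℕ → H}
    (hxs : Tendsto xs atTop (𝓝 x)) (hhs : Tendsto (fun k => h (xs k)) atTop (𝓝 (h x)))
    (hvs : Tendsto vs atTop (𝓝 v)) (hsub : ∀ᶠ k in atTop, FrechetSubgradAt h (vs k) (xs k)) :
    v ∈ limSubdiff h x := by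
  obtain ⟨N, hN⟩ := eventually_atTop.1 hsub
  have shift := tendsto_add_atTop_nat N
  exact ⟨fun k => xs (k + N), fun k => vs (k + N), hxs.comp shift, hhs.comp shift, hvs.comp shift,
    fun k => hN _ (Nat.le_add_left N k)⟩

lemma FrechetSubgradAt.mem_limSubdiff {h : H → EReal} {v x : H} (hv : FrechetSubgradAt h v x) :
    v ∈ limSubdiff h x :=
  ⟨fun _ => x, fun _ => v, tendsto_const_nhds, tendsto_const_nhds, tendsto_const_nhds, fun _ => hv⟩

lemma mem_of_mem_limSubdiff {h : H → EReal} {v x : H} {C : Set (H × H)} (hC : IsClosed C)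
    (hfrechet : ∀ x v, h x ≠ ⊤ → FrechetSubgradAt h v x → (x, v) ∈ C) (hx : h x ≠ ⊤)
    (hv : v ∈ limSubdiff h x) : (x, v) ∈ C := by
  obtain ⟨xs, vs, hxs, hhs, hvs, hsub⟩ := hv
  refine hC.mem_of_tendsto (hxs.prodMk_nhds hvs) ?_
  filter_upwards [hhs.eventually_lt_const hx.lt_top] with k hk
  exact hfrechet _ _ hk.ne (hsub k)

lemma map_mem_limSubdiff {X Y : Type*} [NormedAddCommGroup X] [InnerProductSpace ℝ X]
    [NormedAddCommGroup Y] [InnerProductSpace ℝ Y] {h : X → EReal} {h' : Y → EReal} {φ : X → Y}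
    {ψ : X × X → Y} {d : X × X → ℝ} (hφ : Continuous φ) (hψ : Continuous ψ) (hd : Continuous d)
    (hfrechet : ∀ x v, h x ≠ ⊤ → FrechetSubgradAt h v x → FrechetSubgradAt h' (ψ (x, v)) (φ x))
    (hval : ∀ x v, h x ≠ ⊤ → v ∈ limSubdiff h x → h' (φ x) = h x + (d (x, v) : EReal))
    {x v : X} (hx : h x ≠ ⊤) (hv : v ∈ limSubdiff h x) : ψ (x, v) ∈ limSubdiff h' (φ x) := by
  have hval_x := hval x v hx hv
  obtain ⟨xs, vs, hxs, hhs, hvs, hsub⟩ := hv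
  have hfin : ∀ᶠ k in atTop, h (xs k) ≠ ⊤ :=
    (hhs.eventually_lt_const hx.lt_top).mono fun _ => ne_of_lt
  have hpairs : Tendsto (fun k => (xs k, vs k)) atTop (𝓝 (x, v)) := hxs.prodMk_nhds hvs
  have hdiff := (continuous_coe_real_ereal.tendsto _).comp ((hd.tendsto _).comp hpairs)
  have hsum := (EReal.continuousAt_add (Or.inr (EReal.coe_ne_bot _))
    (Or.inr (EReal.coe_ne_top _))).tendsto.comp (hhs.prodMk_nhds hdiff)
  have hvalues : Tendsto (fun k => h' (φ (xs k))) atTop (𝓝 (h' (φ x))) := by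
    rw [hval_x]
    refine hsum.congr' ?_
    filter_upwards [hfin] with k hk
    exact (hval _ _ hk (hsub k).mem_limSubdiff).symm
  refine mem_limSubdiff_of_eventually ((hφ.tendsto x).comp hxs) hvalues
    ((hψ.tendsto _).comp hpairs) ?_
  filter_upwards [hfin] with k hk
  exact hfrechet _ _ hk (hsub k)

lemma map_mem_limSubdiff_of_comp {X Y : Type*} [NormedAddCommGroup X] [InnerProductSpace ℝ X]
    [NormedAddCommGroup Y] [InnerProductSpace ℝ Y] {h : Y → EReal} (e : X ≃ₗᵢ[ℝ] Y) {v x : X}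
    (hv : v ∈ limSubdiff (h ∘ e) x) : e v ∈ limSubdiff h (e x) := by
  obtain ⟨xs, vs, hxs, hhs, hvs, hsub⟩ := hv
  refine ⟨e ∘ xs, e ∘ vs, (e.continuous.tendsto x).comp hxs, hhs, (e.continuous.tendsto v).comp hvs,
    fun k => ?_⟩
  have pulled : FrechetSubgradAt ((h ∘ e) ∘ e.symm) (e (vs k)) (e (xs k)) :=
    FrechetSubgradAt.comp_isometry (v := vs k) (by simpa using hsub k) e.symm.isometry fun y => by
      rw [← map_sub, ← e.inner_map_map, e.apply_symm_apply]
  simpa [Function.comp_def] using pulled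

/-! ### The Kurdyka–Łojasiewicz inequality -/

lemma exists_coe_of_lt_of_lt_add {u v : EReal} {a : ℝ} (huv : u < v) (hva : v < u + a) :
    ∃ r s : ℝ, u = r ∧ v = s ∧ s - r ∈ Ioo 0 a := by
  have hu : u ≠ ⊥ := by
    rintro rfl
    simp at hva
  lift u to ℝ using ⟨ne_top_of_lt huv, hu⟩
  lift v to ℝ using ⟨ne_top_of_lt hva, ne_bot_of_gt huv⟩
  norm_cast at huv hva
  exact ⟨u, v, rfl, rfl, sub_pos.2 huv, sub_lt_iff_lt_add'.2 hva⟩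

lemma klExpAt_iff {h : H → EReal} {α : ℝ} {x₀ : H} (hα : α < 1) :
    KLExpAt h α x₀ ↔ ∃ K > (0 : ℝ), ∃ ε > (0 : ℝ), ∃ a > (0 : ℝ), ∀ x, ‖x - x₀‖ ≤ ε →
      ∀ r s : ℝ, h x₀ = r → h x = s → s - r ∈ Ioo 0 a →
      ∀ v ∈ limSubdiff h x, (s - r) ^ α ≤ K * ‖v‖ := by
  have ineq_iff {K Δ D : ℝ} (hΔ : 0 < Δ) : 1 ≤ K * Δ ^ (-α) * D ↔ Δ ^ α ≤ K * D := by
    rw [Real.rpow_neg hΔ.le, mul_right_comm, ← div_eq_mul_inv, one_le_div (by positivity)]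
  have h1α : 0 < 1 - α := sub_pos.2 hα
  constructor
  · rintro ⟨c, hc, ε, hε, a, ha, hKL⟩
    refine ⟨c * (1 - α), by positivity, ε, hε, a, ha, fun x hx r s hr hs hΔ v hv => ?_⟩
    have hlt : h x₀ < h x := by
      rw [hr, hs]
      exact_mod_cast sub_pos.1 hΔ.1
    have hlta : h x < h x₀ + (a : EReal) := by
      rw [hr, hs]
      exact_mod_cast sub_lt_iff_lt_add'.1 hΔ.2
    have hineq := hKL x hx hlt hlta ⟨v, hv⟩
    rw [hr, hs, EReal.toReal_coe, EReal.toReal_coe, ineq_iff hΔ.1] at hineq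
    refine hineq.trans ?_
    gcongr
    simpa using infDist_le_dist_of_mem (x := 0) hv
  · rintro ⟨K, hK, ε, hε, a, ha, hKL⟩
    refine ⟨K / (1 - α), by positivity, ε, hε, a, ha, fun x hx hlt hlta hne => ?_⟩
    obtain ⟨r, s, hr, hs, hΔ⟩ := exists_coe_of_lt_of_lt_add hlt hlta
    rw [hr, hs, EReal.toReal_coe, EReal.toReal_coe, div_mul_cancel₀ _ h1α.ne', ineq_iff hΔ.1,
      ← div_le_iff₀' hK]
    refine (le_infDist hne).2 fun v hv => ?_
    rw [dist_zero_left, div_le_iff₀' hK]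
    exact hKL x hx r s hr hs hΔ v hv

lemma klExpAt_of_eq_top {h : H → EReal} {α : ℝ} {x₀ : H} (hx₀ : h x₀ = ⊤) : KLExpAt h α x₀ :=
  ⟨1, one_pos, 1, one_pos, 1, one_pos, fun x _ hlt => absurd hlt (by simp [hx₀])⟩

lemma IsKLWithExp.comp_linearIsometryEquiv {X Y : Type*} [NormedAddCommGroup X]
    [InnerProductSpace ℝ X] [NormedAddCommGroup Y] [InnerProductSpace ℝ Y] {h : Y → EReal} {α : ℝ}
    (hα : α < 1) (hKL : IsKLWithExp h α) (e : X ≃ₗᵢ[ℝ] Y) : IsKLWithExp (h ∘ e) α := by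
  rintro x₀ ⟨v₀, hv₀⟩
  obtain ⟨K, hK, ε, hε, a, ha, bound⟩ :=
    (klExpAt_iff hα).1 (hKL (e x₀) ⟨_, map_mem_limSubdiff_of_comp e hv₀⟩)
  refine (klExpAt_iff hα).2 ⟨K, hK, ε, hε, a, ha, fun x hx r s hr hs hΔ v hv => ?_⟩
  rw [← e.norm_map v]
  refine bound (e x) ?_ r s hr hs hΔ _ (map_mem_limSubdiff_of_comp e hv)
  rwa [← map_sub, e.norm_map]

/-! ### Convex conjugates and Bregman distances -/

lemma conjE_le_coe_iff {g : H → ℝ} {y : H} {r : ℝ} :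
    conjE g y ≤ r ↔ ∀ x, ⟪x, y⟫ - g x ≤ r := by
  simp only [conjE, iSup_le_iff, EReal.coe_le_coe_iff]

lemma conjE_ne_bot (g : H → ℝ) (y : H) : conjE g y ≠ ⊥ :=
  ne_bot_of_le_ne_bot (EReal.coe_ne_bot _)
    (le_iSup (fun x => ((⟪x, y⟫ - g x : ℝ) : EReal)) 0)

lemma convex_epigraph_conjE (g : H → ℝ) : Convex ℝ {p : H × ℝ | conjE g p.1 ≤ p.2} := by
  simp only [conjE_le_coe_iff, ofPred_forall]
  refine convex_iInter fun x => ?_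
  rintro ⟨y, r⟩ hr ⟨z, s⟩ hs a b ha hb hab
  simp only [mem_ofPred_eq, Prod.smul_mk, Prod.mk_add_mk, inner_add_right, inner_smul_right,
    smul_eq_mul] at hr hs ⊢
  calc a * ⟪x, y⟫ + b * ⟪x, z⟫ - g x
      = a * (⟪x, y⟫ - g x) + b * (⟪x, z⟫ - g x) := by linear_combination g x * hab
    _ ≤ a * r + b * s := by gcongr

lemma ConvexSubgradAt.conjE_eq {g : H → ℝ} {y s : H} (hy : ConvexSubgradAt g y s) :
    conjE g y = ((⟪s, y⟫ - g s : ℝ) : EReal) := by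
  refine le_antisymm (conjE_le_coe_iff.2 fun x => ?_)
    (le_iSup (fun x => ((⟪x, y⟫ - g x : ℝ) : EReal)) s)
  have := hy x
  rw [inner_sub_right, real_inner_comm, real_inner_comm s] at this
  linarith

section Gradient

variable [CompleteSpace H]

lemma hasGradientAt_inner_sub {φ : H → ℝ} {w x : H} (hφ : HasGradientAt φ w x) (y : H) :
    HasGradientAt (fun x' => ⟪y, x'⟫ - φ x') (y - w) x := by
  rw [hasGradientAt_iff_hasFDerivAt, map_sub]
  exact (InnerProductSpace.toDual ℝ H y).hasFDerivAt.sub hφ.hasFDerivAt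

lemma hasGradientAt_comp_continuousLinearMap {Z : Type*} [NormedAddCommGroup Z]
    [InnerProductSpace ℝ Z] [CompleteSpace Z] {φ : H → ℝ} {w : H} (A : Z →L[ℝ] H) {z : Z}
    (hφ : HasGradientAt φ w (A z)) :
    HasGradientAt (fun z' => φ (A z')) (ContinuousLinearMap.adjoint A w) z := by
  refine (hφ.hasFDerivAt.comp z A.hasFDerivAt).congr_fderiv ?_
  ext z'
  simp [ContinuousLinearMap.adjoint_inner_left]

lemma eq_gradient_of_conjE_le {g : H → ℝ} {w y s : H} (hg : HasGradientAt g w s)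
    (hy : conjE g y ≤ ((⟪s, y⟫ - g s : ℝ) : EReal)) : y = w := by
  have hmax : IsLocalMax (fun x => ⟪y, x⟫ - g x) s := Eventually.of_forall fun x => by
    simpa only [real_inner_comm] using conjE_le_coe_iff.1 hy x
  have hzero := hmax.hasFDerivAt_eq_zero (hasGradientAt_inner_sub hg y).hasFDerivAt
  exact sub_eq_zero.1 ((LinearIsometryEquiv.map_eq_zero_iff _).1 hzero)

lemma eq_gradient_of_convexSubgradAtE_conjE {g : H → ℝ} {w y s : H} (hconv : ConvexOn ℝ univ g)
    (hg : HasGradientAt g w s) (hs : ConvexSubgradAtE (conjE g) s y) : y = w := by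
  refine eq_gradient_of_conjE_le hg ?_
  have hw := hs w
  rw [(convexSubgradAt_of_hasGradientAt hconv hg).conjE_eq] at hw
  induction hb : conjE g y with
  | bot => exact bot_le
  | top =>
    rw [hb, EReal.top_add_coe, top_le_iff] at hw
    exact absurd hw (EReal.coe_ne_top _)
  | coe b =>
    rw [hb, inner_sub_right] at hw
    norm_cast at hw ⊢
    linarith

end Gradient

/-- The Bregman distance `D_g(x, s) = g(x) - g(s) - ⟨∇g(s), x - s⟩`, where `g'` stands for `∇g`. It
measures the gap between the two potentials of the theorem. -/
def bregmanDist (g : H → ℝ) (g' : H → H) (x s : H) : ℝ :=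
  g x - g s - ⟪g' s, x - s⟫

lemma bregmanDist_self (g : H → ℝ) (g' : H → H) (x : H) : bregmanDist g g' x x = 0 := by
  simp [bregmanDist]

lemma bregmanDist_le_mul_sq {g : H → ℝ} {g' : H → H} {ℓ : ℝ≥0} {x s : H}
    (hx : ConvexSubgradAt g (g' x) x) (hlip : LipschitzWith ℓ g') :
    bregmanDist g g' x s ≤ ℓ * ‖s - x‖ ^ 2 := by
  calc bregmanDist g g' x s ≤ ⟪g' s - g' x, s - x⟫ := by
        have := hx s
        rw [bregmanDist, inner_sub_left, ← neg_sub s x, inner_neg_right]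
        linarith
    _ ≤ ‖g' s - g' x‖ * ‖s - x‖ := real_inner_le_norm _ _
    _ ≤ ℓ * ‖s - x‖ * ‖s - x‖ := by gcongr; exact hlip.norm_sub_le s x
    _ = ℓ * ‖s - x‖ ^ 2 := by ring

lemma bregmanDist_nonneg {g : H → ℝ} {g' : H → H} {x s : H} (hs : ConvexSubgradAt g (g' s) s) :
    0 ≤ bregmanDist g g' x s := by
  have := hs x
  rw [bregmanDist]
  linarith

lemma rpow_le_mul_of_le_add_mul_sq {α a ℓ K m e t : ℝ} (hα : α ∈ Ico (1 / 2) 1) (hK : 0 ≤ K)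
    (hℓ : 0 ≤ ℓ) (ht : 0 ≤ t) (he : e ∈ Ioo 0 a) (hem : e ≤ m + ℓ * t ^ 2)
    (hm : 0 < m → m ^ α ≤ K * t) : e ^ α ≤ (a ^ α + K + ℓ ^ α) * t := by
  obtain ⟨hα₀, hα₁⟩ := hα
  obtain ⟨he₀, hea⟩ := he
  have hα_pos : 0 < α := by linarith
  have ha : 0 ≤ a ^ α := Real.rpow_nonneg (he₀.trans hea).le α
  have hℓα : 0 ≤ ℓ ^ α := Real.rpow_nonneg hℓ α
  rcases le_or_gt 1 t with h1t | ht1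
  · calc e ^ α ≤ a ^ α := by gcongr
      _ ≤ a ^ α * t := le_mul_of_one_le_right ha h1t
      _ ≤ (a ^ α + K + ℓ ^ α) * t := by gcongr; linarith
  · -- Subadditivity of `x ↦ x ^ α` splits off `t ^ (2 * α)`, and `t ^ (2 * α) ≤ t` since `t < 1`.
    have hmax : (max m 0) ^ α ≤ K * t := by
      rcases le_or_gt m 0 with hm₀ | hm₀
      · rw [max_eq_right hm₀, Real.zero_rpow hα_pos.ne']
        positivity
      · rw [max_eq_left hm₀.le]
        exact hm hm₀
    have ht2 : (t ^ 2) ^ α ≤ t := by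
      rw [← Real.rpow_natCast_mul ht]
      exact Real.rpow_le_self_of_le_one ht ht1.le (by push_cast; linarith)
    calc e ^ α ≤ (max m 0 + ℓ * t ^ 2) ^ α := by
          gcongr
          exact hem.trans (by gcongr; exact le_max_left m 0)
      _ ≤ (max m 0) ^ α + (ℓ * t ^ 2) ^ α :=
          Real.rpow_add_le_add_rpow (le_max_right m 0) (by positivity) hα_pos.le hα₁.le
      _ ≤ K * t + ℓ ^ α * t := by
          rw [Real.mul_rpow hℓ (sq_nonneg t)]
          gcongr
      _ ≤ (a ^ α + K + ℓ ^ α) * t := by linarith [mul_nonneg ha ht]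

/-! ### The lifted objective -/

section Lift

variable {Z : Type*} [NormedAddCommGroup Z] [InnerProductSpace ℝ Z]

/-- The difference-of-convex type objective `z ↦ G z - g (A z)`, an abstract form of the paper's
`Ê`. -/
def dcObjective (G : Z → EReal) (A : Z →L[ℝ] H) (g : H → ℝ) (z : Z) : EReal :=
  G z - (g (A z) : EReal)

/-- The lifted objective `(z, y) ↦ G z - ⟨A z, y⟩ + g*(y)`, an abstract form of the paper's `E`;
minimizing it over `y` gives back `dcObjective`. -/
def conjLift (G : Z → EReal) (A : Z →L[ℝ] H) (g : H → ℝ) (p : WithLp 2 (Z × H)) : EReal :=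
  G p.fst - ((⟪A p.fst, p.snd⟫ : ℝ) : EReal) + conjE g p.snd

variable {G : Z → EReal} {A : Z →L[ℝ] H} {g : H → ℝ} {g' : H → H} {ℓ : ℝ≥0}

lemma FrechetSubgradAt.slice_fst {h : WithLp 2 (Z × H) → EReal} {q p : WithLp 2 (Z × H)}
    (hq : FrechetSubgradAt h q p) :
    FrechetSubgradAt (fun z => h (WithLp.toLp 2 (z, p.snd))) q.fst p.fst := by
  refine FrechetSubgradAt.comp_isometry (φ := fun z => WithLp.toLp 2 (z, p.snd)) hq
    (Isometry.of_dist_eq fun z z' => ?_) fun z => ?_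
  · simp [WithLp.prod_dist_eq_of_L2]
  · simp [WithLp.prod_inner_apply]

lemma FrechetSubgradAt.slice_snd {h : WithLp 2 (Z × H) → EReal} {q p : WithLp 2 (Z × H)}
    (hq : FrechetSubgradAt h q p) :
    FrechetSubgradAt (fun y => h (WithLp.toLp 2 (p.fst, y))) q.snd p.snd := by
  refine FrechetSubgradAt.comp_isometry (φ := fun y => WithLp.toLp 2 (p.fst, y)) hq
    (Isometry.of_dist_eq fun y y' => ?_) fun y => ?_
  · simp [WithLp.prod_dist_eq_of_L2]
  · simp [WithLp.prod_inner_apply]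

lemma exists_coe_of_conjLift_ne_top (hG : ∀ z, G z ≠ ⊥) {p : WithLp 2 (Z × H)}
    (hp : conjLift G A g p ≠ ⊤) : (∃ r : ℝ, G p.fst = r) ∧ ∃ b : ℝ, conjE g p.snd = b := by
  have hb := conjE_ne_bot g p.snd
  rw [conjLift, sub_eq_add_neg, ← EReal.coe_neg] at hp
  have hr_top : G p.fst ≠ ⊤ := fun h => hp <| by
    rw [h, EReal.top_add_coe, EReal.top_add_of_ne_bot hb]
  have hb_top : conjE g p.snd ≠ ⊤ := fun h => hp <| by
    rw [h, EReal.add_top_of_ne_bot]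
    simpa [EReal.add_eq_bot_iff] using hG _
  exact ⟨⟨_, (EReal.coe_toReal hr_top (hG _)).symm⟩, _, (EReal.coe_toReal hb_top hb).symm⟩

lemma conjLift_eq_dcObjective_add_bregmanDist {p : WithLp 2 (Z × H)} {s : H}
    (hs : ConvexSubgradAt g (g' s) s) (hp : p.snd = g' s) :
    conjLift G A g p = dcObjective G A g p.fst + (bregmanDist g g' (A p.fst) s : EReal) := by
  calc conjLift G A g p
      = G p.fst + ((-⟪A p.fst, g' s⟫ + (⟪s, g' s⟫ - g s) : ℝ) : EReal) := by
        simp only [conjLift, hp, hs.conjE_eq, sub_eq_add_neg, add_assoc, EReal.coe_add,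
          EReal.coe_neg]
    _ = G p.fst + ((-g (A p.fst) + bregmanDist g g' (A p.fst) s : ℝ) : EReal) := by
        rw [bregmanDist, inner_sub_right, real_inner_comm (A p.fst), real_inner_comm s]
        congr 2
        ring
    _ = dcObjective G A g p.fst + (bregmanDist g g' (A p.fst) s : EReal) := by
        rw [dcObjective, EReal.coe_add, EReal.coe_neg, sub_eq_add_neg, add_assoc]

section Subgradient

variable [CompleteSpace H] {p q : WithLp 2 (Z × H)}

lemma FrechetSubgradAt.snd_eq_gradient_of_conjLift (hG : ∀ z, G z ≠ ⊥)
    (hconv : ConvexOn ℝ univ g) (hg : ∀ x, HasGradientAt g (g' x) x)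
    (hp : conjLift G A g p ≠ ⊤) (hq : FrechetSubgradAt (conjLift G A g) q p) :
    p.snd = g' (A p.fst + q.snd) := by
  obtain ⟨⟨r, hr⟩, b, hb⟩ := exists_coe_of_conjLift_ne_top hG hp
  have smooth : FrechetSubgradAt (fun y => ((⟪A p.fst, y⟫ - r : ℝ) : EReal)) (A p.fst) p.snd := by
    simpa using frechetSubgradAt_of_hasGradientAt
      (hasGradientAt_inner_sub (hasGradientAt_const p.snd r) (A p.fst))
  have sum_eq : (fun y => ((⟪A p.fst, y⟫ - r : ℝ) : EReal)
      + conjLift G A g (WithLp.toLp 2 (p.fst, y))) = conjE g := by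
    funext y
    calc ((⟪A p.fst, y⟫ - r : ℝ) : EReal)
          + (G p.fst - ((⟪A p.fst, y⟫ : ℝ) : EReal) + conjE g y)
        = ((⟪A p.fst, y⟫ - r + (r - ⟪A p.fst, y⟫) : ℝ) : EReal) + conjE g y := by
          rw [hr, ← add_assoc, EReal.coe_add, EReal.coe_sub r]
      _ = conjE g y := by rw [sub_add_sub_cancel, sub_self, EReal.coe_zero, zero_add]
  have hconj : FrechetSubgradAt (conjE g) (A p.fst + q.snd) p.snd :=
    sum_eq ▸ smooth.add hq.slice_snd
  exact eq_gradient_of_convexSubgradAtE_conjE hconv (hg _)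
    (hconj.convexSubgradAtE (convex_epigraph_conjE g) (hb ▸ EReal.coe_ne_top b))

lemma snd_eq_gradient_of_mem_limSubdiff_conjLift (hG : ∀ z, G z ≠ ⊥)
    (hconv : ConvexOn ℝ univ g) (hg : ∀ x, HasGradientAt g (g' x) x) (hg' : Continuous g')
    (hp : conjLift G A g p ≠ ⊤) (hq : q ∈ limSubdiff (conjLift G A g) p) :
    p.snd = g' (A p.fst + q.snd) := by
  have hclosed : IsClosed {m : WithLp 2 (Z × H) × WithLp 2 (Z × H) |
      m.1.snd = g' (A m.1.fst + m.2.snd)} := isClosed_eq (by fun_prop) (by fun_prop)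
  exact mem_of_mem_limSubdiff hclosed
    (fun _ _ hp hq => hq.snd_eq_gradient_of_conjLift hG hconv hg hp) hp hq

variable [CompleteSpace Z]

lemma FrechetSubgradAt.dcObjective_of_conjLift (hG : ∀ z, G z ≠ ⊥)
    (hg : ∀ x, HasGradientAt g (g' x) x) (hp : conjLift G A g p ≠ ⊤)
    (hq : FrechetSubgradAt (conjLift G A g) q p) :
    FrechetSubgradAt (dcObjective G A g)
      (q.fst + ContinuousLinearMap.adjoint A (p.snd - g' (A p.fst))) p.fst := by
  obtain ⟨-, b, hb⟩ := exists_coe_of_conjLift_ne_top hG hp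
  have smooth : FrechetSubgradAt (fun z => ((⟪p.snd, A z⟫ - (g (A z) + b) : ℝ) : EReal))
      (ContinuousLinearMap.adjoint A (p.snd - g' (A p.fst))) p.fst :=
    frechetSubgradAt_of_hasGradientAt <| hasGradientAt_comp_continuousLinearMap A <|
      hasGradientAt_inner_sub
        (hasGradientAt_iff_hasFDerivAt.2 ((hg (A p.fst)).hasFDerivAt.add_const b)) p.snd
  have sum_eq : (fun z => conjLift G A g (WithLp.toLp 2 (z, p.snd))
      + ((⟪p.snd, A z⟫ - (g (A z) + b) : ℝ) : EReal)) = dcObjective G A g := by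
    funext z
    calc G z - ((⟪A z, p.snd⟫ : ℝ) : EReal) + conjE g p.snd
          + ((⟪p.snd, A z⟫ - (g (A z) + b) : ℝ) : EReal)
        = G z + ((-⟪A z, p.snd⟫ + (b + (⟪p.snd, A z⟫ - (g (A z) + b))) : ℝ) : EReal) := by
          simp only [hb, sub_eq_add_neg, add_assoc, EReal.coe_add, EReal.coe_neg]
      _ = G z + ((-g (A z) : ℝ) : EReal) := by
          rw [real_inner_comm]
          congr 2
          ring
      _ = dcObjective G A g z := by rw [dcObjective, sub_eq_add_neg, EReal.coe_neg]
  exact sum_eq ▸ hq.slice_fst.add smooth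

lemma mem_limSubdiff_dcObjective_of_conjLift (hG : ∀ z, G z ≠ ⊥)
    (hconv : ConvexOn ℝ univ g) (hg : ∀ x, HasGradientAt g (g' x) x) (hg' : Continuous g')
    (hp : conjLift G A g p ≠ ⊤) (hq : q ∈ limSubdiff (conjLift G A g) p) :
    q.fst + ContinuousLinearMap.adjoint A (p.snd - g' (A p.fst)) ∈
      limSubdiff (dcObjective G A g) p.fst := by
  have hgc : Continuous g := continuous_iff_continuousAt.2 fun x => (hg x).continuousAt
  refine map_mem_limSubdiff (φ := fun p : WithLp 2 (Z × H) => p.fst)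
    (ψ := fun m => m.2.fst + ContinuousLinearMap.adjoint A (m.1.snd - g' (A m.1.fst)))
    (d := fun m => -bregmanDist g g' (A m.1.fst) (A m.1.fst + m.2.snd))
    (by fun_prop) (by fun_prop) (by unfold bregmanDist; fun_prop)
    (fun _ _ hp hq => hq.dcObjective_of_conjLift hG hg hp) (fun p q hp hq => ?_) hp hq
  rw [conjLift_eq_dcObjective_add_bregmanDist (convexSubgradAt_of_hasGradientAt hconv (hg _))
    (snd_eq_gradient_of_mem_limSubdiff_conjLift hG hconv hg hg' hp hq), EReal.coe_neg,
    ← sub_eq_add_neg, EReal.add_sub_cancel_right]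

end Subgradient

section KL

variable [CompleteSpace H] {α : ℝ} {p₀ p q : WithLp 2 (Z × H)}

lemma norm_snd_sub_gradient_le (hG : ∀ z, G z ≠ ⊥) (hconv : ConvexOn ℝ univ g)
    (hg : ∀ x, HasGradientAt g (g' x) x) (hlip : LipschitzWith ℓ g')
    (hp : conjLift G A g p ≠ ⊤) (hq : q ∈ limSubdiff (conjLift G A g) p) :
    ‖p.snd - g' (A p.fst)‖ ≤ ℓ * ‖q‖ := by
  rw [snd_eq_gradient_of_mem_limSubdiff_conjLift hG hconv hg hlip.continuous hp hq]
  refine (hlip.norm_sub_le _ _).trans ?_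
  rw [add_sub_cancel_left]
  gcongr
  exact WithLp.norm_snd_le _ q

lemma klExpAt_conjLift_of_snd_ne (hα : α ∈ Ico 0 1) (hG : ∀ z, G z ≠ ⊥)
    (hconv : ConvexOn ℝ univ g) (hg : ∀ x, HasGradientAt g (g' x) x) (hlip : LipschitzWith ℓ g')
    (hp₀ : p₀.snd ≠ g' (A p₀.fst)) : KLExpAt (conjLift G A g) α p₀ := by
  set δ := ‖p₀.snd - g' (A p₀.fst)‖
  have hδ : 0 < δ := norm_sub_pos_iff.2 hp₀
  have hcont : Continuous fun p : WithLp 2 (Z × H) => ‖p.snd - g' (A p.fst)‖ := by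
    have := hlip.continuous
    fun_prop
  obtain ⟨ε, hε, far⟩ := nhds_basis_closedBall.eventually_iff.1
    ((hcont.tendsto p₀).eventually_const_lt (half_lt_self hδ))
  refine (klExpAt_iff hα.2).2 ⟨2 / δ * (ℓ + 1), by positivity, ε, hε, 1, one_pos,
    fun p hp r s _ hs hΔ q hq => ?_⟩
  have hfar : δ / 2 ≤ (ℓ + 1) * ‖q‖ := by
    refine (far (mem_closedBall_iff_norm.2 hp)).le.trans <|
      (norm_snd_sub_gradient_le hG hconv hg hlip (hs ▸ EReal.coe_ne_top s) hq).trans ?_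
    gcongr
    exact le_add_of_nonneg_right zero_le_one
  calc (s - r) ^ α ≤ 1 := Real.rpow_le_one hΔ.1.le hΔ.2.le hα.1
    _ = 2 / δ * (δ / 2) := by field_simp
    _ ≤ 2 / δ * ((ℓ + 1) * ‖q‖) := by gcongr
    _ = 2 / δ * (ℓ + 1) * ‖q‖ := by ring

lemma exists_conjLift_eq_dcObjective_add (hG : ∀ z, G z ≠ ⊥) (hconv : ConvexOn ℝ univ g)
    (hg : ∀ x, HasGradientAt g (g' x) x) (hlip : LipschitzWith ℓ g')
    (hp : conjLift G A g p ≠ ⊤) (hq : q ∈ limSubdiff (conjLift G A g) p) :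
    ∃ d ∈ Icc 0 (ℓ * ‖q‖ ^ 2), conjLift G A g p = dcObjective G A g p.fst + ((d : ℝ) : EReal) := by
  have hsub (x : H) : ConvexSubgradAt g (g' x) x := convexSubgradAt_of_hasGradientAt hconv (hg x)
  refine ⟨_, ⟨bregmanDist_nonneg (hsub _), ?_⟩, conjLift_eq_dcObjective_add_bregmanDist (hsub _)
    (snd_eq_gradient_of_mem_limSubdiff_conjLift hG hconv hg hlip.continuous hp hq)⟩
  refine (bregmanDist_le_mul_sq (hsub _) hlip).trans ?_
  rw [add_sub_cancel_left]
  gcongr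
  exact WithLp.norm_snd_le _ q

variable [CompleteSpace Z]

lemma norm_dcObjective_subgradient_le (hG : ∀ z, G z ≠ ⊥) (hconv : ConvexOn ℝ univ g)
    (hg : ∀ x, HasGradientAt g (g' x) x) (hlip : LipschitzWith ℓ g')
    (hp : conjLift G A g p ≠ ⊤) (hq : q ∈ limSubdiff (conjLift G A g) p) :
    ‖q.fst + ContinuousLinearMap.adjoint A (p.snd - g' (A p.fst))‖ ≤ (1 + ‖A‖ * ℓ) * ‖q‖ := by
  calc ‖q.fst + ContinuousLinearMap.adjoint A (p.snd - g' (A p.fst))‖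
      ≤ ‖q.fst‖ + ‖ContinuousLinearMap.adjoint A‖ * ‖p.snd - g' (A p.fst)‖ :=
        (norm_add_le _ _).trans (by gcongr; exact ContinuousLinearMap.le_opNorm _ _)
    _ ≤ ‖q‖ + ‖A‖ * (ℓ * ‖q‖) := by
        rw [LinearIsometryEquiv.norm_map]
        gcongr
        · exact WithLp.norm_fst_le _ q
        · exact norm_snd_sub_gradient_le hG hconv hg hlip hp hq
    _ = (1 + ‖A‖ * ℓ) * ‖q‖ := by ring

lemma KLExpAt.conjLift_of_snd_eq (hα : α ∈ Ico (1 / 2) 1) (hG : ∀ z, G z ≠ ⊥)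
    (hconv : ConvexOn ℝ univ g) (hg : ∀ x, HasGradientAt g (g' x) x) (hlip : LipschitzWith ℓ g')
    (hp₀ : p₀.snd = g' (A p₀.fst)) (hKL : KLExpAt (dcObjective G A g) α p₀.fst) :
    KLExpAt (conjLift G A g) α p₀ := by
  obtain ⟨K, hK, ε, hε, a, ha, bound⟩ := (klExpAt_iff hα.2).1 hKL
  have base_eq : conjLift G A g p₀ = dcObjective G A g p₀.fst := by
    rw [conjLift_eq_dcObjective_add_bregmanDist
      (convexSubgradAt_of_hasGradientAt hconv (hg _)) hp₀, bregmanDist_self, EReal.coe_zero,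
      add_zero]
  refine (klExpAt_iff hα.2).2 ⟨a ^ α + K * (1 + ‖A‖ * ℓ) + (ℓ : ℝ) ^ α, by positivity, ε, hε, a, ha,
    fun p hp r s hr hs hΔ q hq => ?_⟩
  have hfin : conjLift G A g p ≠ ⊤ := hs ▸ EReal.coe_ne_top s
  obtain ⟨d, ⟨hd₀, hd⟩, hpd⟩ := exists_conjLift_eq_dcObjective_add hG hconv hg hlip hfin hq
  have hobj : dcObjective G A g p.fst = ((s - d : ℝ) : EReal) := by
    rw [EReal.coe_sub, ← hs, hpd, EReal.add_sub_cancel_right]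
  refine rpow_le_mul_of_le_add_mul_sq (m := s - d - r) hα (by positivity) ℓ.2 (norm_nonneg q) hΔ
    (by linarith) fun hm => ?_
  calc (s - d - r) ^ α
      ≤ K * ‖q.fst + ContinuousLinearMap.adjoint A (p.snd - g' (A p.fst))‖ :=
        bound p.fst ((WithLp.norm_fst_le _ (p - p₀)).trans hp) r (s - d) (base_eq ▸ hr) hobj
          ⟨hm, by linarith [hΔ.2]⟩ _
          (mem_limSubdiff_dcObjective_of_conjLift hG hconv hg hlip.continuous hfin hq)
    _ ≤ K * (1 + ‖A‖ * ℓ) * ‖q‖ := by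
        rw [mul_assoc]
        gcongr
        exact norm_dcObjective_subgradient_le hG hconv hg hlip hfin hq

theorem IsKLWithExp.conjLift_of_dcObjective (hα : α ∈ Ico (1 / 2) 1) (hG : ∀ z, G z ≠ ⊥)
    (hconv : ConvexOn ℝ univ g) (hg : ∀ x, HasGradientAt g (g' x) x) (hlip : LipschitzWith ℓ g')
    (hKL : IsKLWithExp (dcObjective G A g) α) : IsKLWithExp (conjLift G A g) α := by
  rintro p₀ ⟨q₀, hq₀⟩
  by_cases htop : conjLift G A g p₀ = ⊤
  · exact klExpAt_of_eq_top htop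
  by_cases hp₀ : p₀.snd = g' (A p₀.fst)
  · exact KLExpAt.conjLift_of_snd_eq hα hG hconv hg hlip hp₀ <| hKL _
      ⟨_, mem_limSubdiff_dcObjective_of_conjLift hG hconv hg hlip.continuous htop hq₀⟩
  · exact klExpAt_conjLift_of_snd_ne ⟨by linarith [hα.1], hα.2⟩ hG hconv hg hlip hp₀

end KL

end Lift

section Triples

variable {n : ℕ}

/-- The rearrangement `(x, y, w) ↦ ((x, w), y)`, which groups the variables of `E` as those of
`conjLift`. -/
def tripEquiv (n : ℕ) : Trip n ≃ₗᵢ[ℝ] WithLp 2 (Pr2 n × Eucl n) :=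
  (LinearIsometryEquiv.withLpProdCongr 2 (LinearIsometryEquiv.refl ℝ (Eucl n))
    (LinearIsometryEquiv.withLpProdComm 2 ℝ (Eucl n) (Eucl n))).trans
    (LinearIsometryEquiv.withLpProdAssoc 2 ℝ (Eucl n) (Eucl n) (Eucl n)).symm

/-- The summand `f x + P₁ x + L / 2 * ‖x - w‖ ^ 2` shared by `Ê` and `E`, in the role of `G`. -/
def regularizedComposite (f : Eucl n → ℝ) (P₁ : Eucl n → EReal) (L : ℝ) (m : Pr2 n) : EReal :=
  (f m.fst : EReal) + P₁ m.fst + ((L / 2 * ‖m.fst - m.snd‖ ^ 2 : ℝ) : EReal)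

lemma regularizedComposite_ne_bot (f : Eucl n → ℝ) {P₁ : Eucl n → EReal} (hP₁ : ∀ x, P₁ x ≠ ⊥)
    (L : ℝ) (m : Pr2 n) : regularizedComposite f P₁ L m ≠ ⊥ := by
  simp only [regularizedComposite, ne_eq, EReal.add_eq_bot_iff, EReal.coe_ne_bot, hP₁, or_self,
    not_false_eq_true]

lemma dcObjective_regularizedComposite (f : Eucl n → ℝ) (P₁ : Eucl n → EReal) (P₂ : Eucl n → ℝ)
    (L : ℝ) :
    dcObjective (regularizedComposite f P₁ L) (WithLp.fstL 2 ℝ (Eucl n) (Eucl n)) P₂ =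
      hatE3 f P₁ P₂ L := by
  funext m
  exact add_right_comm _ _ _

lemma conjLift_regularizedComposite_comp_tripEquiv (f : Eucl n → ℝ) (P₁ : Eucl n → EReal)
    (P₂ : Eucl n → ℝ) (L : ℝ) :
    conjLift (regularizedComposite f P₁ L) (WithLp.fstL 2 ℝ (Eucl n) (Eucl n)) P₂ ∘ tripEquiv n =
      potE3 f P₁ P₂ L := by
  funext p
  simp only [Function.comp_apply, conjLift, regularizedComposite, potE3, potE, sub_eq_add_neg]
  ac_rfl

theorem KL_half_hatE_implies_KL_half_E_general {f : Eucl n → ℝ} {P₁ : Eucl n → EReal}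
    {P₂ : Eucl n → ℝ} {p₂' : Eucl n → Eucl n} {L α : ℝ} {ℓ : ℝ≥0} (hα : α ∈ Ico (1 / 2) 1)
    (hP₁ : ∀ x, P₁ x ≠ ⊥) (hP₂conv : ConvexOn ℝ univ P₂)
    (hP₂grad : ∀ y, HasGradientAt P₂ (p₂' y) y) (hP₂lip : LipschitzWith ℓ p₂')
    (hKL : IsKLWithExp (hatE3 f P₁ P₂ L) α) : IsKLWithExp (potE3 f P₁ P₂ L) α := by
  rw [← dcObjective_regularizedComposite] at hKL
  rw [← conjLift_regularizedComposite_comp_tripEquiv]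
  exact (hKL.conjLift_of_dcObjective hα (regularizedComposite_ne_bot f hP₁ L) hP₂conv hP₂grad
    hP₂lip).comp_linearIsometryEquiv hα.2 (tripEquiv n)

end Triples

/-- Theorem 4.2(i): if `Ê(x,w) = F(x) + L/2‖x-w‖²` is a KL function with exponent `1/2`,
then so is the potential `E(x,y,w) = f(x) + P₁(x) - ⟨x,y⟩ + P₂*(y) + L/2‖x-w‖²`. -/
theorem KL_half_hatE_implies_KL_half_E
    {n : ℕ} (f : Eucl n → ℝ) (f' : Eucl n → Eucl n) (P₁ : Eucl n → EReal)
    (P₂ : Eucl n → ℝ) (p₂' : Eucl n → Eucl n) (L : ℝ)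
    (hL : 0 < L)
    (hfconv : ConvexOn ℝ Set.univ f)
    (hfgrad : ∀ y, HasGradientAt f (f' y) y)
    (hflip : ∀ y z, ‖f' y - f' z‖ ≤ L * ‖y - z‖)
    (hP₁ : ProperClosedConvexE P₁)
    (hP₂cont : Continuous P₂)
    (hP₂conv : ConvexOn ℝ Set.univ P₂)
    (hP₂grad : ∀ y, HasGradientAt P₂ (p₂' y) y)
    (hP₂lip : ∃ ℓ ≥ (0:ℝ), ∀ u v, ‖p₂' u - p₂' v‖ ≤ ℓ * ‖u - v‖)
    (hKL : IsKLWithExp (hatE3 f P₁ P₂ L) (1 / 2)) :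
    IsKLWithExp (potE3 f P₁ P₂ L) (1 / 2) := by
  obtain ⟨ℓ, hℓ, hlip⟩ := hP₂lip
  exact KL_half_hatE_implies_KL_half_E_general (by norm_num) hP₁.1 hP₂conv hP₂grad
    (LipschitzWith.of_dist_le_mul (K := ⟨ℓ, hℓ⟩) fun u v => by
      rw [dist_eq_norm, dist_eq_norm]
      exact hlip u v) hKL
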